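/- arXiv:0905.1118 — 3 statements merged into one kernel-verified Lean document; each statement's English description precedes it below -/
import Mathlib

section
/- Let G be a group with finite symmetric generating set Γ, acting partially on sets S and T, and let μ be a weighted ε-Følner set for the partial action on S. Suppose h : S → T satisfies: for every s ∈ S and γ ∈ Γ with μ(s) + μ(s·γ) > 0, both s·γ and h(s)·γ are defined and h(s·γ) = h(s)·γ. Then ν : T → [0,∞) defined by ν(t) = ∑_{s ∈ S, h(s) = t} μ(s) is a weighted ε-Følner set for the partial action on T. -/
/-- A partial (right) action of a group `G` on a set `S`: a partial function
`S × G → S` (encoded with `Option`) such that `x·1 = x`, `x·g = y ↔ x = y·g⁻¹`,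
and `x·(gh) = (x·g)·h` whenever all the quantities involved are defined. -/
structure PartialAction (G : Type*) [Group G] (S : Type*) where
  act : S → G → Option S
  act_one : ∀ x, act x 1 = some x
  act_inv : ∀ (x y : S) (g : G), act x g = some y ↔ act y g⁻¹ = some x
  act_mul : ∀ (x y z w : S) (g h : G),
    act x g = some y → act y h = some z → act x (g * h) = some w → w = z

/-- Extension of a weight function to `Option`, with the convention that
undefined values get weight `0`. -/
def optApply {S : Type*} (μ : S → ℝ) : Option S → ℝ
  | none => 0
  | some s => μ s

/-- `μ` is a weighted `ε`-Følner set for the partial action `P` with respect to `Γ`: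
`μ` is nonnegative with finite support and
`∑ γ ∈ Γ, ∑ s, |μ(s·γ) − μ(s)| < ε · ∑ s, μ(s)`. -/
def IsWeightedFolner {G S : Type*} [Group G] (P : PartialAction G S)
    (Γ : Finset G) (ε : ℝ) (μ : S → ℝ) : Prop :=
  (Function.support μ).Finite ∧ (∀ s, 0 ≤ μ s) ∧
    ∑ γ ∈ Γ, ∑ᶠ s, |optApply μ (P.act s γ) - μ s| < ε * ∑ᶠ s, μ s

/-!
Write `ν` for the push-forward of `μ` along `h`. The hypothesis on `h`, applied to `γ⁻¹`, gives
every `s'` with `μ(s') ≠ 0` a `γ`-predecessor `s` with `h(s)·γ = h(s')`. Since `s ↦ s·γ` is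
injective where it is defined, reindexing by `s'` gives `ν(t·γ) = ∑_{h(s) = t} μ(s·γ)`. Hence
`ν(t·γ) - ν(t) = ∑_{h(s) = t} (μ(s·γ) - μ(s))`, and the triangle inequality on each fibre of `h`
shows that the boundary of `ν` is at most that of `μ`, while the total masses agree.
-/

open Function

/-- The push-forward of the weight function `f` along `h`: the weight of `t` is the total weight of
the fibre of `h` over `t`. By the `finsum` convention it is `0` if infinitely many points of the
fibre have nonzero weight. -/
noncomputable def fiberSum {S T M : Type*} [AddCommMonoid M] (h : S → T) (f : S → M) (t : T) : M :=
  ∑ᶠ s ∈ {s : S | h s = t}, f s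

section FiberSum

variable {S T M : Type*}

section AddCommMonoid

variable [AddCommMonoid M] {h : S → T} {f : S → M}

lemma support_fiberSum_subset (h : S → T) (f : S → M) : support (fiberSum h f) ⊆ h '' support f :=
  fun _ ht ↦
    let ⟨s, hst, hs⟩ := exists_ne_zero_of_finsum_mem_ne_zero ht
    ⟨s, hs, hst⟩

lemma finite_support_fiberSum (h : S → T) (hf : (support f).Finite) :
    (support (fiberSum h f)).Finite :=
  (hf.image h).subset (support_fiberSum_subset h f)

lemma fiberSum_nonneg [Preorder M] [IsOrderedAddMonoid M] (hf : ∀ s, 0 ≤ f s) (t : T) :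
    0 ≤ fiberSum h f t :=
  finsum_nonneg fun s ↦ finsum_nonneg fun _ ↦ hf s

lemma fiberSum_eq_sum_filter [DecidableEq T] {F : Finset S} (hF : support f ⊆ F) (t : T) :
    fiberSum h f t = ∑ s ∈ F with h s = t, f s := by
  refine finsum_mem_eq_sum_of_inter_support_eq f ?_
  ext s
  simpa [and_comm] using fun hs _ ↦ hF hs

lemma finsum_fiberSum (h : S → T) (hf : (support f).Finite) :
    ∑ᶠ t, fiberSum h f t = ∑ᶠ s, f s := by
  classical
  have hF : support f ⊆ hf.toFinset := by simp
  simp_rw [fiberSum_eq_sum_filter hF, finsum_eq_sum_of_support_subset f hF]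
  exact finsum_sum_filter h hf.toFinset f

end AddCommMonoid

lemma fiberSum_sub [AddCommGroup M] {f g : S → M} (hf : (support f).Finite)
    (hg : (support g).Finite) (h : S → T) (t : T) :
    fiberSum h (fun s ↦ f s - g s) t = fiberSum h f t - fiberSum h g t := by
  classical
  have hF_f : support f ⊆ (hf.toFinset ∪ hg.toFinset : Finset S) := by simp
  have hF_g : support g ⊆ (hf.toFinset ∪ hg.toFinset : Finset S) := by simp
  have hF_sub : support (fun s ↦ f s - g s) ⊆ (hf.toFinset ∪ hg.toFinset : Finset S) := by
    simpa using support_sub f g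
  rw [fiberSum_eq_sum_filter hF_f, fiberSum_eq_sum_filter hF_g, fiberSum_eq_sum_filter hF_sub,
    Finset.sum_sub_distrib]

section LinearOrder

variable [AddCommGroup M] [LinearOrder M] [IsOrderedAddMonoid M] {f : S → M}

lemma abs_fiberSum_le (hf : (support f).Finite) (h : S → T) (t : T) :
    |fiberSum h f t| ≤ fiberSum h (fun s ↦ |f s|) t := by
  classical
  have hF : support f ⊆ hf.toFinset := by simp
  have hF_abs : support (fun s ↦ |f s|) ⊆ hf.toFinset := by simp
  rw [fiberSum_eq_sum_filter hF, fiberSum_eq_sum_filter hF_abs]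
  exact Finset.abs_sum_le_sum_abs _ _

lemma finsum_abs_fiberSum_le (hf : (support f).Finite) (h : S → T) :
    ∑ᶠ t, |fiberSum h f t| ≤ ∑ᶠ s, |f s| := by
  have hf_abs : (support fun s ↦ |f s|).Finite := HasFiniteSupport.fun_comp hf abs_zero
  calc ∑ᶠ t, |fiberSum h f t|
    _ ≤ ∑ᶠ t, fiberSum h (fun s ↦ |f s|) t :=
      finsum_le_finsum' (HasFiniteSupport.fun_comp (finite_support_fiberSum h hf) abs_zero)
        (finite_support_fiberSum h hf_abs) (abs_fiberSum_le hf h)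
    _ = ∑ᶠ s, |f s| := finsum_fiberSum h hf_abs

end LinearOrder

lemma optApply_fiberSum (h : S → T) (μ : S → ℝ) (o : Option T) :
    optApply (fiberSum h μ) o = fiberSum (some ∘ h) μ o := by
  cases o <;> simp [optApply, fiberSum]

end FiberSum

lemma optApply_nonneg {S : Type*} {μ : S → ℝ} (hμ : ∀ s, 0 ≤ μ s) : ∀ o, 0 ≤ optApply μ o
  | none => le_rfl
  | some s => hμ s

namespace PartialAction

variable {G S T : Type*} [Group G] (P : PartialAction G S)

lemma eq_of_act_eq_some {x y z : S} {g : G} (hx : P.act x g = some z) (hy : P.act y g = some z) :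
    x = y := by
  rw [P.act_inv] at hx hy
  exact Option.some.inj (hx.symm.trans hy)

/-- The translate `s ↦ μ(s·g)` of a weight function, with weight `0` where `s·g` is undefined. -/
def translate (g : G) (μ : S → ℝ) (s : S) : ℝ :=
  optApply μ (P.act s g)

variable {P} {Q : PartialAction G T} {g : G} {μ : S → ℝ}

lemma translate_eq_of_act_eq_some {s s' : S} (hs : P.act s g = some s') :
    P.translate g μ s = μ s' := by
  rw [translate, hs, optApply]

lemma exists_act_eq_some_of_translate_ne_zero {s : S} (hs : P.translate g μ s ≠ 0) :
    ∃ s', P.act s g = some s' ∧ μ s' ≠ 0 := by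
  rcases hact : P.act s g with _ | s'
  · simp [translate, hact, optApply] at hs
  · rw [translate_eq_of_act_eq_some hact] at hs
    exact ⟨s', rfl, hs⟩

variable (P g) in
lemma finite_support_translate (hμ : (support μ).Finite) :
    (support (P.translate g μ)).Finite := by
  refine Set.Finite.of_injOn (f := fun s ↦ P.act s g) (t := some '' support μ) ?_ ?_
    (hμ.image some)
  · intro s hs
    obtain ⟨s', hact, hs'⟩ := exists_act_eq_some_of_translate_ne_zero hs
    exact ⟨s', hs', hact.symm⟩
  · intro x hx y _ hxy
    obtain ⟨z, hact, -⟩ := exists_act_eq_some_of_translate_ne_zero hx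
    exact P.eq_of_act_eq_some hact (hxy.symm.trans hact)

lemma translate_fiberSum {h : S → T}
    (hh : ∀ s', μ s' ≠ 0 → ∃ s, P.act s g = some s' ∧ Q.act (h s) g = some (h s')) :
    Q.translate g (fiberSum h μ) = fiberSum h (P.translate g μ) := by
  funext t
  rw [translate, optApply_fiberSum, fiberSum, fiberSum, ← finsum_mem_inter_support μ,
    ← finsum_mem_inter_support (P.translate g μ)]
  choose! pred hP hQ using hh
  refine finsum_mem_eq_of_bijOn pred ⟨?_, ?_, ?_⟩ ?_
  · rintro s' ⟨hs't, hs'⟩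
    refine ⟨Q.eq_of_act_eq_some (hQ s' hs') hs't.symm, ?_⟩
    rwa [mem_support, translate_eq_of_act_eq_some (hP s' hs')]
  · rintro x ⟨-, hx⟩ y ⟨-, hy⟩ hxy
    exact Option.some.inj ((hP x hx).symm.trans (hxy ▸ hP y hy))
  · rintro s ⟨rfl, hs⟩
    obtain ⟨s', hact, hs'⟩ := exists_act_eq_some_of_translate_ne_zero hs
    obtain rfl : pred s' = s := P.eq_of_act_eq_some (hP s' hs') hact
    exact ⟨s', ⟨(hQ s' hs').symm, hs'⟩, rfl⟩
  · rintro s' ⟨-, hs'⟩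
    exact (translate_eq_of_act_eq_some (hP s' hs')).symm

lemma finsum_abs_translate_fiberSum_sub_le {h : S → T} (hμ : (support μ).Finite)
    (hh : ∀ s', μ s' ≠ 0 → ∃ s, P.act s g = some s' ∧ Q.act (h s) g = some (h s')) :
    ∑ᶠ t, |Q.translate g (fiberSum h μ) t - fiberSum h μ t| ≤
      ∑ᶠ s, |P.translate g μ s - μ s| := by
  have hμg := P.finite_support_translate g hμ
  simp_rw [translate_fiberSum hh, ← fiberSum_sub hμg hμ]
  exact finsum_abs_fiberSum_le (HasFiniteSupport.fun_sub hμg hμ) h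

end PartialAction

theorem pushforward_weighted_folner_general {G S T : Type*} [Group G] {Γ : Finset G}
    {P : PartialAction G S} {Q : PartialAction G T} {ε : ℝ} {μ : S → ℝ}
    (hμ : IsWeightedFolner P Γ ε μ) {h : S → T}
    (hh : ∀ s, ∀ γ ∈ Γ, 0 < μ s →
      ∃ s', P.act s γ⁻¹ = some s' ∧ Q.act (h s) γ⁻¹ = some (h s')) :
    IsWeightedFolner Q Γ ε (fiberSum h μ) := by
  obtain ⟨hfin, hnonneg, hlt⟩ := hμ
  refine ⟨finite_support_fiberSum h hfin, fiberSum_nonneg hnonneg, ?_⟩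
  rw [finsum_fiberSum h hfin]
  refine (Finset.sum_le_sum fun γ hγ ↦ ?_).trans_lt hlt
  refine PartialAction.finsum_abs_translate_fiberSum_sub_le hfin fun s' hs' ↦ ?_
  obtain ⟨s, hP, hQ⟩ := hh s' γ hγ ((hnonneg s').lt_of_ne' hs')
  exact ⟨s, (P.act_inv _ _ _).2 hP, (Q.act_inv _ _ _).2 hQ⟩

/-- If `μ` is a weighted `ε`-Følner set for the partial action on `S` and `h : S → T`
commutes with the action of the generators wherever `μ(s) + μ(s·γ) > 0`, then the
push-forward `ν(t) = ∑_{h(s) = t} μ(s)` is a weighted `ε`-Følner set for the action on `T`. -/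
theorem pushforward_weighted_folner {G S T : Type*} [Group G]
    (Γ : Finset G)
    (hsymm : ∀ γ ∈ Γ, γ⁻¹ ∈ Γ)
    (hgen : Subgroup.closure (Γ : Set G) = ⊤)
    (P : PartialAction G S) (Q : PartialAction G T)
    (ε : ℝ) (μ : S → ℝ) (hμ : IsWeightedFolner P Γ ε μ)
    (h : S → T)
    (hh : ∀ s, ∀ γ ∈ Γ, 0 < μ s + optApply μ (P.act s γ) →
      ∃ s' t', P.act s γ = some s' ∧ Q.act (h s) γ = some t' ∧ h s' = t') :
    IsWeightedFolner Q Γ ε (fun t => ∑ᶠ s ∈ {s : S | h s = t}, μ s) := by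
  refine pushforward_weighted_folner_general hμ fun s γ hγ hs ↦ ?_
  obtain ⟨s', _, hP, hQ, rfl⟩ :=
    hh s γ⁻¹ (hsymm γ hγ) (add_pos_of_pos_of_nonneg hs (optApply_nonneg hμ.2.1 _))
  exact ⟨s', hP, hQ⟩
end

section
/- Let G be a group with finite symmetric generating set Γ acting partially on a set S. If μ is a weighted ε-Følner set, 0 ≤ δ < 1, and ν is a function from a finite subset of S into [0,∞) with ν(s) ≤ μ(s) for all s and ν(S) ≥ (1−δ)·μ(S), then ν (restricted to its support) is a weighted (ε + 2|Γ|δ)/(1−δ)-Følner set. -/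
/-!
For a partial injection `φ` of `S`, the functional `V_φ(μ) = ∑ₛ |μ(φ s) - μ(s)|` is subadditive,
and `V_φ(f) ≤ 2‖f‖₁` because `s ↦ φ s` hits every point at most once. Hence
`V_φ(ν) ≤ V_φ(μ) + 2‖ν - μ‖₁`, and when `0 ≤ ν ≤ μ` the distance `‖ν - μ‖₁` is just the lost mass
`μ(S) - ν(S) ≤ δ μ(S)`. Summing over `Γ` and comparing `μ(S)` with `ν(S)` gives the constant.
-/

open Function

section OptApply

variable {S T : Type*}

theorem optApply_add (f g : T → ℝ) (o : Option T) :
    optApply (f + g) o = optApply f o + optApply g o := by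
  cases o <;> simp [optApply]

theorem abs_optApply (f : T → ℝ) (o : Option T) : |optApply f o| = optApply |f| o := by
  cases o <;> simp [optApply]

theorem optApply_nonneg_s7 {f : T → ℝ} (hf : 0 ≤ f) (o : Option T) : 0 ≤ optApply f o := by
  cases o with
  | none => exact le_rfl
  | some t => exact hf t

theorem support_optApply (f : T → ℝ) : support (optApply f) = some '' support f := by
  ext (_ | t) <;> simp [optApply]

theorem hasFiniteSupport_optApply {f : T → ℝ} (hf : f.HasFiniteSupport) :
    (optApply f).HasFiniteSupport := by
  rw [HasFiniteSupport, support_optApply]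
  exact hf.image some

theorem finsum_optApply (f : T → ℝ) : ∑ᶠ o, optApply f o = ∑ᶠ t, f t :=
  calc ∑ᶠ o, optApply f o = ∑ᶠ o ∈ Set.range some, optApply f o := by
        rw [finsum_mem_def, Set.indicator_eq_self.2]
        exact (support_optApply f).trans_subset (Set.image_subset_range _ _)
    _ = ∑ᶠ t, f t := finsum_mem_range (Option.some_injective T)

theorem injOn_support_optApply_comp (φ : S ≃. T) (f : T → ℝ) :
    Set.InjOn φ (support (optApply f ∘ φ)) := by
  intro a ha b _ hab
  obtain ⟨t, -, hat⟩ : φ a ∈ some '' support f := support_optApply f ▸ ha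
  exact φ.inj hat.symm (hab ▸ hat.symm)

theorem hasFiniteSupport_optApply_comp (φ : S ≃. T) {f : T → ℝ} (hf : f.HasFiniteSupport) :
    (fun s ↦ optApply f (φ s)).HasFiniteSupport :=
  (hasFiniteSupport_optApply hf).preimage (injOn_support_optApply_comp φ f)

theorem finsum_optApply_comp_le (φ : S ≃. T) {f : T → ℝ} (hf : f.HasFiniteSupport)
    (hf₀ : 0 ≤ f) : ∑ᶠ s, optApply f (φ s) ≤ ∑ᶠ t, f t := by
  have hfin := hasFiniteSupport_optApply hf
  have hindicator : ((Set.range φ).indicator (optApply f)).HasFiniteSupport :=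
    hfin.subset (Set.support_indicator.trans_subset Set.inter_subset_right)
  calc ∑ᶠ s, optApply f (φ s) = ∑ᶠ o ∈ Set.range φ, optApply f o :=
        (finsum_mem_range' (injOn_support_optApply_comp φ f)).symm
    _ = ∑ᶠ o, (Set.range φ).indicator (optApply f) o := finsum_mem_def _ _
    _ ≤ ∑ᶠ o, optApply f o :=
        finsum_le_finsum' hindicator hfin
          (Set.indicator_le_self' fun o _ ↦ optApply_nonneg_s7 hf₀ o)
    _ = ∑ᶠ t, f t := finsum_optApply f

end OptApply

section FinsumAbsSub

variable {S M : Type*} [AddCommGroup M] [LinearOrder M] [IsOrderedAddMonoid M] {μ ν : S → M}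

theorem finsum_abs_sub_of_le (hμ : μ.HasFiniteSupport) (hν : ν.HasFiniteSupport) (hle : ν ≤ μ) :
    ∑ᶠ s, |ν s - μ s| = ∑ᶠ s, μ s - ∑ᶠ s, ν s := by
  rw [← finsum_sub_distrib hμ hν]
  exact finsum_congr fun s ↦ by rw [abs_sub_comm, abs_of_nonneg (sub_nonneg.2 (hle s))]

theorem finsum_sub_finsum_abs_sub_le (hμ : μ.HasFiniteSupport) (hν : ν.HasFiniteSupport) :
    ∑ᶠ s, μ s - ∑ᶠ s, |ν s - μ s| ≤ ∑ᶠ s, ν s := by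
  have hd : (fun s ↦ |ν s - μ s|).HasFiniteSupport := (hν.fun_sub hμ).fun_comp abs_zero
  rw [← finsum_sub_distrib hμ hd]
  refine finsum_le_finsum' (hμ.fun_sub hd) hν fun s ↦ ?_
  rw [sub_le_comm, abs_sub_comm]
  exact le_abs_self _

end FinsumAbsSub

section ShiftVariation

variable {S : Type*} (φ : S ≃. S) {f g μ ν : S → ℝ}

/-- The `ℓ¹`-variation `∑ₛ |f(φ s) - f(s)|` of a weight `f` under a partial injection `φ`, where
`f(φ s) = 0` if `φ s` is undefined. The Følner condition bounds its sum over the generators.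
It takes the junk value `0` when infinitely many terms are nonzero. -/
noncomputable def shiftVariation (f : S → ℝ) : ℝ :=
  ∑ᶠ s, |optApply f (φ s) - f s|

theorem shiftVariation_nonneg (f : S → ℝ) : 0 ≤ shiftVariation φ f :=
  finsum_nonneg fun _ ↦ abs_nonneg _

theorem hasFiniteSupport_abs_optApply_sub (hf : f.HasFiniteSupport) :
    (fun s ↦ |optApply f (φ s) - f s|).HasFiniteSupport :=
  ((hasFiniteSupport_optApply_comp φ hf).fun_sub hf).fun_comp abs_zero

theorem shiftVariation_add_le (hf : f.HasFiniteSupport) (hg : g.HasFiniteSupport) :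
    shiftVariation φ (f + g) ≤ shiftVariation φ f + shiftVariation φ g := by
  have hf' := hasFiniteSupport_abs_optApply_sub φ hf
  have hg' := hasFiniteSupport_abs_optApply_sub φ hg
  unfold shiftVariation
  rw [← finsum_add_distrib hf' hg']
  refine finsum_le_finsum' (hasFiniteSupport_abs_optApply_sub φ (hf.add hg)) (hf'.fun_add hg')
    fun s ↦ ?_
  rw [optApply_add, Pi.add_apply, add_sub_add_comm]
  exact abs_add_le _ _

theorem shiftVariation_le_two_mul_finsum_abs (hf : f.HasFiniteSupport) :
    shiftVariation φ f ≤ 2 * ∑ᶠ s, |f s| := by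
  have habs : |f|.HasFiniteSupport := hf.fun_comp abs_zero
  have hshift := hasFiniteSupport_optApply_comp φ habs
  calc shiftVariation φ f ≤ ∑ᶠ s, (optApply |f| (φ s) + |f| s) := by
        refine finsum_le_finsum' (hasFiniteSupport_abs_optApply_sub φ hf) (hshift.fun_add habs)
          fun s ↦ ?_
        rw [← abs_optApply]
        exact abs_sub _ _
    _ = ∑ᶠ s, optApply |f| (φ s) + ∑ᶠ s, |f| s := finsum_add_distrib hshift habs
    _ ≤ ∑ᶠ s, |f| s + ∑ᶠ s, |f| s := by
        gcongr
        exact finsum_optApply_comp_le φ habs (abs_nonneg f)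
    _ = 2 * ∑ᶠ s, |f s| := (two_mul _).symm

theorem shiftVariation_le_add_two_mul_finsum_abs_sub (hμ : μ.HasFiniteSupport)
    (hν : ν.HasFiniteSupport) :
    shiftVariation φ ν ≤ shiftVariation φ μ + 2 * ∑ᶠ s, |ν s - μ s| :=
  calc shiftVariation φ ν = shiftVariation φ (μ + (ν - μ)) := by rw [add_sub_cancel]
    _ ≤ shiftVariation φ μ + shiftVariation φ (ν - μ) := shiftVariation_add_le φ hμ (hν.sub hμ)
    _ ≤ shiftVariation φ μ + 2 * ∑ᶠ s, |ν s - μ s| := by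
        gcongr
        exact shiftVariation_le_two_mul_finsum_abs φ (hν.sub hμ)

theorem sum_shiftVariation_le {ι : Type*} (I : Finset ι) (Φ : ι → S ≃. S)
    (hμ : μ.HasFiniteSupport) (hν : ν.HasFiniteSupport) :
    ∑ i ∈ I, shiftVariation (Φ i) ν ≤
      ∑ i ∈ I, shiftVariation (Φ i) μ + 2 * I.card * ∑ᶠ s, |ν s - μ s| :=
  calc ∑ i ∈ I, shiftVariation (Φ i) ν
      ≤ ∑ i ∈ I, (shiftVariation (Φ i) μ + 2 * ∑ᶠ s, |ν s - μ s|) :=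
        Finset.sum_le_sum fun i _ ↦ shiftVariation_le_add_two_mul_finsum_abs_sub (Φ i) hμ hν
    _ = ∑ i ∈ I, shiftVariation (Φ i) μ + 2 * I.card * ∑ᶠ s, |ν s - μ s| := by
        rw [Finset.sum_add_distrib, Finset.sum_const, nsmul_eq_mul]
        ring

end ShiftVariation

/-- The partial injection `s ↦ s·g` of `S` given by an element `g` of a partially acting group,
with partial inverse `s ↦ s·g⁻¹`. -/
def PartialAction.toPEquiv {G S : Type*} [Group G] (P : PartialAction G S) (g : G) : S ≃. S where
  toFun s := P.act s g
  invFun s := P.act s g⁻¹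
  inv s t := (P.act_inv s t g).symm

theorem isWeightedFolner_iff {G S : Type*} [Group G] {P : PartialAction G S} {Γ : Finset G}
    {ε : ℝ} {μ : S → ℝ} :
    IsWeightedFolner P Γ ε μ ↔ μ.HasFiniteSupport ∧ 0 ≤ μ ∧
      ∑ γ ∈ Γ, shiftVariation (P.toPEquiv γ) μ < ε * ∑ᶠ s, μ s :=
  Iff.rfl

theorem weighted_folner_refine_general {G S : Type*} [Group G] {Γ : Finset G}
    {P : PartialAction G S} {ε δ : ℝ} (hδ1 : δ < 1) {μ ν : S → ℝ}
    (hμ : IsWeightedFolner P Γ ε μ) (hνfin : ν.HasFiniteSupport) (hν0 : 0 ≤ ν)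
    (hdist : ∑ᶠ s, |ν s - μ s| ≤ δ * ∑ᶠ s, μ s) :
    IsWeightedFolner P Γ ((ε + 2 * (Γ.card : ℝ) * δ) / (1 - δ)) ν := by
  obtain ⟨hμfin, hμ0, hμvar⟩ := isWeightedFolner_iff.1 hμ
  refine isWeightedFolner_iff.2 ⟨hνfin, hν0, ?_⟩
  set M := ∑ᶠ s, μ s
  set C := ε + 2 * (Γ.card : ℝ) * δ
  have hvar : ∑ γ ∈ Γ, shiftVariation (P.toPEquiv γ) ν < C * M :=
    calc ∑ γ ∈ Γ, shiftVariation (P.toPEquiv γ) ν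
        ≤ ∑ γ ∈ Γ, shiftVariation (P.toPEquiv γ) μ + 2 * Γ.card * ∑ᶠ s, |ν s - μ s| :=
          sum_shiftVariation_le Γ P.toPEquiv hμfin hνfin
      _ < ε * M + 2 * Γ.card * (δ * M) :=
          add_lt_add_of_lt_of_le hμvar (by gcongr)
      _ = C * M := by ring
  have hC : 0 < C := by
    have hCM : 0 < C * M :=
      (Finset.sum_nonneg fun γ _ ↦ shiftVariation_nonneg (P.toPEquiv γ) ν).trans_lt hvar
    exact pos_of_mul_pos_left hCM (finsum_nonneg hμ0)
  have hmass : (1 - δ) * M ≤ ∑ᶠ s, ν s := by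
    linarith [finsum_sub_finsum_abs_sub_le hμfin hνfin]
  have hδ : 0 < 1 - δ := sub_pos.2 hδ1
  calc ∑ γ ∈ Γ, shiftVariation (P.toPEquiv γ) ν < C * M := hvar
    _ = C / (1 - δ) * ((1 - δ) * M) := by field_simp
    _ ≤ C / (1 - δ) * ∑ᶠ s, ν s := by gcongr

/-- If `μ` is a weighted `ε`-Følner set, `0 ≤ δ < 1`, and `ν ≤ μ` pointwise is
nonnegative with finite support and `ν(S) ≥ (1−δ)·μ(S)`, then `ν` is a weighted
`(ε + 2|Γ|δ)/(1−δ)`-Følner set. -/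
theorem weighted_folner_refine {G S : Type*} [Group G]
    (Γ : Finset G)
    (hsymm : ∀ γ ∈ Γ, γ⁻¹ ∈ Γ)
    (hgen : Subgroup.closure (Γ : Set G) = ⊤)
    (P : PartialAction G S)
    (ε δ : ℝ) (hδ0 : 0 ≤ δ) (hδ1 : δ < 1)
    (μ ν : S → ℝ) (hμ : IsWeightedFolner P Γ ε μ)
    (hνfin : (Function.support ν).Finite) (hν0 : ∀ s, 0 ≤ ν s)
    (hle : ∀ s, ν s ≤ μ s)
    (htot : (1 - δ) * ∑ᶠ s, μ s ≤ ∑ᶠ s, ν s) :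
    IsWeightedFolner P Γ ((ε + 2 * (Γ.card : ℝ) * δ) / (1 - δ)) ν := by
  refine weighted_folner_refine_general hδ1 hμ hνfin hν0 ?_
  linarith [finsum_abs_sub_of_le hμ.1 hνfin hle]
end

section
/- Let T ∈ 𝒯. If there exists U ∈ 𝒯 satisfying the defining conditions for ∂T, then there is a maximum such U: a U* ∈ 𝒯 satisfying the defining conditions for ∂T such that every U ∈ 𝒯 satisfying the defining conditions for ∂T is contained in U*. -/
/-- The (strict) lexicographic order on finite binary sequences, with `false < true`. -/
def lexLt (u v : List Bool) : Prop := List.Lex (· < ·) u v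

/-- `t` is an initial segment of the infinite binary sequence `x`. -/
def StreamPrefix (t : List Bool) (x : ℕ → Bool) : Prop :=
  ∀ i : Fin t.length, t.get i = x i

/-- `T` is a finite rooted binary tree, identified with the (finite) set of addresses of
its leaves: every infinite binary sequence has a unique initial segment in `T`. -/
def IsTree (T : Finset (List Bool)) : Prop :=
  ∀ x : ℕ → Bool, ∃! t, t ∈ T ∧ StreamPrefix t x

/-- `U` is contained in `V`: every element of `U` has an extension in `V`. -/
def ContainedIn (U V : Finset (List Bool)) : Prop :=
  ∀ u ∈ U, ∃ v ∈ V, u <+: v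

/-- `T/u = {s : u⌢s ∈ T}`. -/
def treeQuot (T : Finset (List Bool)) (u : List Bool) : Finset (List Bool) :=
  (T.filter (fun t => u <+: t)).image (fun t => t.drop u.length)

/-- `u` is an interior element of `T`: an element of `T` which is neither the
lexicographically least nor the lexicographically greatest element of `T`. -/
def IsInterior (T : Finset (List Bool)) (u : List Bool) : Prop :=
  u ∈ T ∧ (∃ a ∈ T, lexLt a u) ∧ (∃ b ∈ T, lexLt u b)

/-- `U` satisfies the defining conditions for `∂T`: `U` is a tree contained in `T`;
(1) `U` contains extensions of both `⟨0,1⟩` and `⟨1,0⟩`;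
(2) either `2|T/u| ≤ |T/v|` for all interior `u <_lex v` of `U`, or `2|T/v| ≤ |T/u|`
for all interior `u <_lex v` of `U`;
(3) the minimum interior element of `U` ends with `1` and the maximum interior element
of `U` ends with `0`. -/
def DefCondDT (T U : Finset (List Bool)) : Prop :=
  IsTree U ∧ ContainedIn U T ∧
  (∃ u ∈ U, [false, true] <+: u) ∧ (∃ u ∈ U, [true, false] <+: u) ∧
  ((∀ u v, IsInterior U u → IsInterior U v → lexLt u v →
      2 * (treeQuot T u).card ≤ (treeQuot T v).card) ∨
   (∀ u v, IsInterior U u → IsInterior U v → lexLt u v →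
      2 * (treeQuot T v).card ≤ (treeQuot T u).card)) ∧
  (∀ u, IsInterior U u → (∀ v, IsInterior U v → ¬ lexLt v u) → u.getLast? = some true) ∧
  (∀ u, IsInterior U u → (∀ v, IsInterior U v → ¬ lexLt u v) → u.getLast? = some false)

/-!
Record an order direction by a side `c`: `c = false` reads leaves from left to right and
`c = true` from right to left, so every argument about one end of a tree applies to both.
A leaf is interior iff its address contains both digits, whichever tree it is regarded in.

If the numbers `|T/u|` double along the interior leaves `u` of `U`, their partial sums stay below
the next term, so `|T/⟨c,!c⟩| < |T/⟨!c,c⟩|`; hence all trees satisfying the conditions double in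
the same direction `c`. The maximum is then their common refinement `W`, whose leaves are the
addresses, among all leaves of these trees, that no other one properly extends. For interior leaves
`u ∈ U` and `v ∈ V` of `W`, with `u` before `v`, doubling along `V` applies to `v` and the leaf of
`V` above `u`, unless that leaf is an endpoint of `V`. By condition (3) the sibling of this endpoint
is also a leaf of `V`, and one passes from `u` along `U` to a leaf of `U` below this sibling, then
along `V` to `v`.
-/

/-- `a` branches off from `b` to the side `c`: after a common initial segment, `a` continues with
the digit `c` and `b` with the other digit. For incomparable addresses, `Branches false` is the
lexicographic order and `Branches true` is its reverse. -/
def Branches (c : Bool) (a b : List Bool) : Prop := ∃ p, p ++ [c] <+: a ∧ p ++ [!c] <+: b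

section Branches

variable {c : Bool} {a b a' b' : List Bool}

theorem branches_not_iff : Branches (!c) a b ↔ Branches c b a := by
  simp only [Branches, Bool.not_not, and_comm]

theorem branches_concat (c : Bool) (p : List Bool) : Branches c (p ++ [c]) (p ++ [!c]) :=
  ⟨p, List.prefix_rfl, List.prefix_rfl⟩

theorem Branches.mono (h : Branches c a b) (ha : a <+: a') (hb : b <+: b') : Branches c a' b' :=
  let ⟨p, hpa, hpb⟩ := h
  ⟨p, hpa.trans ha, hpb.trans hb⟩

theorem Branches.mem_left (h : Branches c a b) : c ∈ a :=
  let ⟨_, hpa, _⟩ := h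
  hpa.subset (by simp)

theorem Branches.mem_right (h : Branches c a b) : (!c) ∈ b :=
  let ⟨_, _, hpb⟩ := h
  hpb.subset (by simp)

theorem Branches.not_prefix (h : Branches c a b) : ¬ a <+: b := by
  intro hab
  obtain ⟨p, hpa, hpb⟩ := h
  have heq : p ++ [c] = p ++ [!c] :=
    (List.prefix_of_prefix_length_le (hpa.trans hab) hpb (by simp)).eq_of_length (by simp)
  simp at heq

theorem Branches.of_prefix_left (h : Branches c a b) (ha : a' <+: a) (hab : ¬ a' <+: b) :
    Branches c a' b := by
  obtain ⟨p, hpa, hpb⟩ := h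
  refine ⟨p, ?_, hpb⟩
  rcases List.prefix_or_prefix_of_prefix hpa ha with hp | hp
  · exact hp
  · rcases List.prefix_concat_iff.1 hp with rfl | hp
    · exact List.prefix_rfl
    · exact absurd (hp.trans ((List.prefix_append _ _).trans hpb)) hab

theorem branches_cons_iff (x : Bool) : Branches c (x :: a) (x :: b) ↔ Branches c a b := by
  constructor
  · rintro ⟨_ | ⟨y, p⟩, hpa, hpb⟩
    · simp_all
    · simp only [List.cons_append, List.cons_prefix_cons] at hpa hpb
      exact ⟨p, hpa.2, hpb.2⟩
  · rintro ⟨p, hpa, hpb⟩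
    exact ⟨x :: p, by simpa using hpa, by simpa using hpb⟩

theorem prefix_or_branches (c : Bool) :
    ∀ a b : List Bool, a <+: b ∨ b <+: a ∨ Branches c a b ∨ Branches c b a
  | [], _ => Or.inl List.nil_prefix
  | _ :: _, [] => Or.inr (Or.inl List.nil_prefix)
  | x :: a, y :: b => by
    rcases eq_or_ne x y with rfl | hxy
    · simpa only [List.cons_prefix_cons, true_and, branches_cons_iff] using prefix_or_branches c a b
    · have hroot : ∀ {l m : List Bool}, Branches c (c :: l) ((!c) :: m) := ⟨[], by simp⟩
      rcases eq_or_ne x c with rfl | hxc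
      · obtain rfl := Bool.eq_not_of_ne hxy.symm
        exact Or.inr (Or.inr (Or.inl hroot))
      · obtain rfl := Bool.eq_not_of_ne hxc
        obtain rfl : y = c := by simpa using hxy.symm
        exact Or.inr (Or.inr (Or.inr hroot))

theorem Branches.of_append_replicate {j : ℕ} (h : Branches c a (b ++ List.replicate j c)) :
    Branches c a b := by
  induction j with
  | zero => simpa using h
  | succ j ih =>
    obtain ⟨p, hpa, hpb⟩ := h
    rw [List.replicate_succ', ← List.append_assoc] at hpb
    rcases List.prefix_concat_iff.1 hpb with heq | hpb
    · simpa using congrArg List.getLast? heq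
    · exact ih ⟨p, hpa, hpb⟩

theorem replicate_prefix_of_branches {k : ℕ} (h : Branches c a (List.replicate k c ++ [!c])) :
    List.replicate (k + 1) c <+: a := by
  obtain ⟨p, hpa, hpk⟩ := h
  rcases List.prefix_concat_iff.1 hpk with heq | hpk
  · rwa [(List.append_left_inj _).1 heq, ← List.replicate_succ'] at hpa
  · have hmem : (!c) ∈ List.replicate k c := hpk.subset (by simp)
    simp at hmem

theorem Branches.lexLt (h : Branches false a b) : lexLt a b := by
  obtain ⟨p, ⟨a', rfl⟩, ⟨b', rfl⟩⟩ := h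
  rw [List.append_assoc, List.append_assoc]
  exact List.Lex.append_left _ (List.Lex.rel (by decide)) p

end Branches

theorem eq_replicate_of_not_mem {c : Bool} {u : List Bool} (h : (!c) ∉ u) :
    u = List.replicate u.length c :=
  List.eq_replicate_of_mem fun b hb => by
    by_contra hbc
    exact h (Bool.eq_not_of_ne hbc ▸ hb)

section PrefixFree

variable {U : Finset (List Bool)} {c : Bool} {u v : List Bool}

theorem eq_or_branches (hU : IsAntichain (· <+: ·) (U : Set (List Bool))) (c : Bool)
    (hu : u ∈ U) (hv : v ∈ U) : u = v ∨ Branches c u v ∨ Branches c v u := by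
  rcases prefix_or_branches c u v with h | h | h
  · exact Or.inl (hU.eq hu hv h)
  · exact Or.inl (hU.eq hv hu h).symm
  · exact Or.inr h

theorem lexLt_iff_branches (hU : IsAntichain (· <+: ·) (U : Set (List Bool))) (hu : u ∈ U)
    (hv : v ∈ U) : lexLt u v ↔ Branches false u v := by
  refine ⟨fun hlt => ?_, Branches.lexLt⟩
  rcases eq_or_branches hU false hu hv with rfl | h | h
  · exact absurd hlt (lt_irrefl (a := u))
  · exact h
  · exact absurd hlt (lt_asymm (a := v) h.lexLt)

theorem replicate_mem_inj (hU : IsAntichain (· <+: ·) (U : Set (List Bool))) {i j : ℕ}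
    (hi : List.replicate i c ∈ U) (hj : List.replicate j c ∈ U) : i = j := by
  wlog hij : i ≤ j generalizing i j
  · exact (this hj hi (le_of_not_ge hij)).symm
  have hprefix : List.replicate i c <+: List.replicate j c :=
    List.prefix_replicate_iff.2 (by simpa using hij)
  simpa using congrArg List.length (hU.eq hi hj hprefix)

theorem sibling_eq_or_branches (hU : IsAntichain (· <+: ·) (U : Set (List Bool))) {k : ℕ}
    (hend : List.replicate (k + 1) c ∈ U) (hsib : List.replicate k c ++ [!c] ∈ U)
    (hu : u ∈ U) (hnu : (!c) ∈ u) :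
    List.replicate k c ++ [!c] = u ∨ Branches c (List.replicate k c ++ [!c]) u := by
  rcases eq_or_branches hU c hsib hu with h | h | h
  · exact Or.inl h
  · exact Or.inr h
  · obtain rfl := hU.eq hend hu (replicate_prefix_of_branches h)
    simp at hnu

end PrefixFree

section Streams

variable {s t : List Bool} {x : ℕ → Bool}

theorem StreamPrefix.of_prefix (ht : StreamPrefix t x) (h : s <+: t) : StreamPrefix s x :=
  fun i => (h.getElem i.2).trans (ht ⟨i, i.2.trans_le h.length_le⟩)

theorem StreamPrefix.prefix_of_length_le (hs : StreamPrefix s x) (ht : StreamPrefix t x)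
    (hle : s.length ≤ t.length) : s <+: t :=
  List.prefix_iff_getElem.2 ⟨hle, fun i hi => (hs ⟨i, hi⟩).trans (ht ⟨i, hi.trans_le hle⟩).symm⟩

theorem StreamPrefix.prefix_or_prefix (hs : StreamPrefix s x) (ht : StreamPrefix t x) :
    s <+: t ∨ t <+: s :=
  (le_total s.length t.length).imp (hs.prefix_of_length_le ht) (ht.prefix_of_length_le hs)

theorem exists_streamPrefix (s : List Bool) : ∃ x, StreamPrefix s x :=
  ⟨fun i => s.getD i true, fun i => by simp⟩

end Streams

theorem isTree_iff {U : Finset (List Bool)} :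
    IsTree U ↔ IsAntichain (· <+: ·) (U : Set (List Bool)) ∧
      ∀ x : ℕ → Bool, ∃ u ∈ U, StreamPrefix u x := by
  refine ⟨fun hU => ⟨fun u hu v hv hne huv => ?_, fun x => (hU x).exists⟩, ?_⟩
  · obtain ⟨x, hx⟩ := exists_streamPrefix v
    exact hne ((hU x).unique ⟨hu, hx.of_prefix huv⟩ ⟨hv, hx⟩)
  · rintro ⟨hanti, hcover⟩ x
    obtain ⟨u, hu, hux⟩ := hcover x
    refine ⟨u, ⟨hu, hux⟩, fun v ⟨hv, hvx⟩ => ?_⟩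
    exact (hvx.prefix_or_prefix hux).elim (hanti.eq hv hu) fun h => (hanti.eq hu hv h).symm

theorem IsTree.isAntichain {U : Finset (List Bool)} (hU : IsTree U) :
    IsAntichain (· <+: ·) (U : Set (List Bool)) :=
  (isTree_iff.1 hU).1

namespace IsTree

variable {U : Finset (List Bool)} {u p : List Bool}

theorem exists_comparable (hU : IsTree U) (s : List Bool) : ∃ u ∈ U, u <+: s ∨ s <+: u := by
  obtain ⟨x, hx⟩ := exists_streamPrefix s
  obtain ⟨u, hu, hux⟩ := (isTree_iff.1 hU).2 x
  exact ⟨u, hu, hux.prefix_or_prefix hx⟩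

theorem exists_concat_prefix (hU : IsTree U) (hu : u ∈ U) (hpu : p <+: u) (hne : p ≠ u)
    (d : Bool) : ∃ v ∈ U, p ++ [d] <+: v := by
  obtain ⟨v, hv, h | h⟩ := hU.exists_comparable (p ++ [d])
  · rcases List.prefix_concat_iff.1 h with rfl | hvp
    · exact ⟨_, hv, List.prefix_rfl⟩
    · obtain rfl := hU.isAntichain.eq hv hu (hvp.trans hpu)
      exact absurd (antisymm hpu hvp) hne
  · exact ⟨v, hv, h⟩

theorem prefix_induction (hU : IsTree U) {P : List Bool → Prop} (leaf : ∀ u ∈ U, P u)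
    (node : ∀ u ∈ U, ∀ p, p <+: u → p ≠ u → (∀ d, P (p ++ [d])) → P p)
    (hu : u ∈ U) (hpu : p <+: u) : P p := by
  induction h : U.sup List.length - p.length using Nat.strong_induction_on generalizing p u with
  | _ n ih =>
    rcases eq_or_ne p u with rfl | hne
    · exact leaf p hu
    · refine node u hu p hpu hne fun d => ?_
      obtain ⟨v, hv, hpv⟩ := hU.exists_concat_prefix hu hpu hne d
      have hlen : (p ++ [d]).length ≤ U.sup List.length :=
        hpv.length_le.trans (Finset.le_sup (f := List.length) hv)
      rw [List.length_append, List.length_singleton] at hlen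
      exact ih _ (by rw [List.length_append, List.length_singleton]; omega) hv hpv rfl

theorem exists_append_replicate_mem (hU : IsTree U) (hu : u ∈ U) (hpu : p <+: u) (c : Bool) :
    ∃ i, p ++ List.replicate i c ∈ U := by
  refine hU.prefix_induction (P := fun p => ∃ i, p ++ List.replicate i c ∈ U)
    (fun u hu => ⟨0, by simpa using hu⟩) (fun _ _ p _ _ ih => ?_) hu hpu
  obtain ⟨i, hi⟩ := ih c
  exact ⟨i + 1, by simpa [List.replicate_succ] using hi⟩

theorem exists_replicate_mem (hU : IsTree U) (c : Bool) : ∃ i, List.replicate i c ∈ U := by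
  obtain ⟨u, hu, -⟩ := hU.exists_comparable []
  exact hU.exists_append_replicate_mem hu List.nil_prefix c

theorem exists_branches_left_iff (hU : IsTree U) {c : Bool} (hu : u ∈ U) :
    (∃ v ∈ U, Branches c v u) ↔ (!c) ∈ u := by
  refine ⟨fun ⟨_, _, h⟩ => h.mem_right, fun hmem => ?_⟩
  obtain ⟨p, q, rfl⟩ := List.append_of_mem hmem
  obtain ⟨v, hv, hpv⟩ := hU.exists_concat_prefix hu (List.prefix_append _ _) (by simp) c
  exact ⟨v, hv, p, hpv, q, by simp⟩

theorem isInterior_iff (hU : IsTree U) (c : Bool) : IsInterior U u ↔ u ∈ U ∧ c ∈ u ∧ (!c) ∈ u := by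
  have hfalse : IsInterior U u ↔ u ∈ U ∧ false ∈ u ∧ true ∈ u := by
    refine and_congr_right fun hu => ?_
    have hleft : (∃ v ∈ U, lexLt v u) ↔ true ∈ u := by
      rw [← Bool.not_false, ← hU.exists_branches_left_iff hu]
      exact exists_congr fun v => and_congr_right fun hv => lexLt_iff_branches hU.isAntichain hv hu
    have hright : (∃ v ∈ U, lexLt u v) ↔ false ∈ u := by
      rw [← Bool.not_true, ← hU.exists_branches_left_iff hu]
      exact exists_congr fun v => and_congr_right fun hv =>
        (lexLt_iff_branches hU.isAntichain hu hv).trans branches_not_iff.symm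
    rw [hleft, hright, and_comm]
  cases c
  · exact hfalse
  · rw [hfalse, and_comm (a := false ∈ u)]; rfl

end IsTree

/-- The endpoint of `U` on the side `c` and its sibling are both leaves of `U`. This is
condition (3) at the end `c` of `U`. -/
def HasEndCaret (c : Bool) (U : Finset (List Bool)) : Prop :=
  ∃ k, List.replicate (k + 1) c ∈ U ∧ List.replicate k c ++ [!c] ∈ U

section EndCaret

variable {U : Finset (List Bool)} {c : Bool} {u : List Bool}

theorem HasEndCaret.exists_sibling_mem (hc : HasEndCaret c U)
    (hU : IsAntichain (· <+: ·) (U : Set (List Bool))) (hu : u ∈ U) (hconst : (!c) ∉ u) :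
    ∃ k, u = List.replicate (k + 1) c ∧ List.replicate k c ++ [!c] ∈ U := by
  obtain ⟨k, hend, hsib⟩ := hc
  rw [eq_replicate_of_not_mem hconst] at hu
  exact ⟨k, replicate_mem_inj hU hu hend ▸ eq_replicate_of_not_mem hconst, hsib⟩

theorem HasEndCaret.getLast?_eq (hc : HasEndCaret c U) (hU : IsTree U) (hu : IsInterior U u)
    (hmin : ∀ v, IsInterior U v → ¬ Branches c v u) : u.getLast? = some (!c) := by
  obtain ⟨k, hend, hsib⟩ := hc
  obtain ⟨huU, -, hnu⟩ := (hU.isInterior_iff c).1 hu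
  rcases sibling_eq_or_branches hU.isAntichain hend hsib huU hnu with rfl | h
  · simp
  · exact absurd h (hmin _ ((hU.isInterior_iff c).2 ⟨hsib, h.mem_left, by simp⟩))

-- The minimum interior leaf is reached from the sibling of the endpoint by descending to the
-- side `c`, so it ends with `!c` only if it is the sibling itself.
theorem hasEndCaret_of_getLast?_eq (hU : IsTree U) (hext : ∃ u ∈ U, [c, !c] <+: u)
    (hlast : ∀ u, IsInterior U u → (∀ v, IsInterior U v → ¬ Branches c v u) →
      u.getLast? = some (!c)) : HasEndCaret c U := by
  obtain ⟨x, hx, hcx⟩ := hext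
  have hcx' : [c] <+: x := (List.prefix_append [c] [!c]).trans hcx
  obtain ⟨k, hend⟩ : ∃ k, List.replicate (k + 1) c ∈ U :=
    hU.exists_append_replicate_mem hx hcx' c
  have hk : k ≠ 0 := by
    rintro rfl
    obtain rfl := hU.isAntichain.eq hend hx hcx'
    simp at hcx
  obtain ⟨y, hy, hsib⟩ := hU.exists_concat_prefix (p := List.replicate k c) hend
    (by simp [List.replicate_succ']) (by simp [List.replicate_succ']) (!c)
  obtain ⟨j, hw⟩ := hU.exists_append_replicate_mem hy hsib c
  have hw_last := hlast _ ((hU.isInterior_iff c).2 ⟨hw, by simp [hk], by simp⟩) fun v hv hvw => by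
    obtain ⟨hvU, -, hv_not⟩ := (hU.isInterior_iff c).1 hv
    obtain rfl := hU.isAntichain.eq hend hvU
      (replicate_prefix_of_branches hvw.of_append_replicate)
    simp at hv_not
  cases j with
  | zero => exact ⟨k, hend, by simpa using hw⟩
  | succ j => simp [List.replicate_succ', ← List.append_assoc] at hw_last

theorem hasEndCaret_iff (hU : IsTree U) (hext : ∃ u ∈ U, [c, !c] <+: u) :
    HasEndCaret c U ↔ ∀ u, IsInterior U u → (∀ v, IsInterior U v → ¬ Branches c v u) →
      u.getLast? = some (!c) :=
  ⟨fun hc _ => hc.getLast?_eq hU, hasEndCaret_of_getLast?_eq hU hext⟩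

theorem hasEndCaret_false_iff (hU : IsTree U) (hext : ∃ u ∈ U, [false, true] <+: u) :
    HasEndCaret false U ↔ ∀ u, IsInterior U u → (∀ v, IsInterior U v → ¬ lexLt v u) →
      u.getLast? = some true :=
  (hasEndCaret_iff hU hext).trans <| forall₂_congr fun _ hu =>
    imp_congr_left <| forall₂_congr fun _ hv => by
      rw [lexLt_iff_branches hU.isAntichain hv.1 hu.1]

theorem hasEndCaret_true_iff (hU : IsTree U) (hext : ∃ u ∈ U, [true, false] <+: u) :
    HasEndCaret true U ↔ ∀ u, IsInterior U u → (∀ v, IsInterior U v → ¬ lexLt u v) →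
      u.getLast? = some false :=
  (hasEndCaret_iff hU hext).trans <| forall₂_congr fun _ hu =>
    imp_congr_left <| forall₂_congr fun _ hv => by
      rw [lexLt_iff_branches hU.isAntichain hu.1 hv.1, ← branches_not_iff, Bool.not_true]

end EndCaret

section Quotient

variable {T : Finset (List Bool)} {u v p : List Bool}

theorem card_treeQuot (T : Finset (List Bool)) (u : List Bool) :
    (treeQuot T u).card = (T.filter (u <+: ·)).card := by
  refine Finset.card_image_of_injOn fun a ha b hb hab => ?_
  obtain ⟨-, r, rfl⟩ := Finset.mem_filter.1 ha
  obtain ⟨-, s, rfl⟩ := Finset.mem_filter.1 hb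
  simpa using hab

theorem card_treeQuot_le_of_prefix (T : Finset (List Bool)) (h : u <+: v) :
    (treeQuot T v).card ≤ (treeQuot T u).card := by
  rw [card_treeQuot, card_treeQuot]
  exact Finset.card_le_card (Finset.monotone_filter_right T fun _ _ hv => h.trans hv)

theorem card_treeQuot_pos (h : ∃ t ∈ T, u <+: t) : 0 < (treeQuot T u).card := by
  rw [card_treeQuot, Finset.card_pos]
  exact h.imp fun t => Finset.mem_filter.2

theorem card_treeQuot_le_add (c : Bool) (hp : p ∉ T) :
    (treeQuot T p).card ≤ (treeQuot T (p ++ [c])).card + (treeQuot T (p ++ [!c])).card := by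
  simp only [card_treeQuot]
  refine (Finset.card_le_card fun t ht => ?_).trans (Finset.card_union_le _ _)
  obtain ⟨htT, r, rfl⟩ := Finset.mem_filter.1 ht
  simp only [Finset.mem_union, Finset.mem_filter, htT, true_and, List.prefix_append_right_inj]
  rcases r with _ | ⟨x, r⟩
  · exact absurd (by simpa using htT) hp
  · rcases eq_or_ne x c with rfl | hxc
    · simp
    · simp [Bool.eq_not_of_ne hxc]

end Quotient

/-- The numbers `|T/u|` at least double from each interior leaf `u` of `U` to the next one, when
the leaves are read starting from the side `c`. This is one of the two alternatives of
condition (2), with interior leaves expressed by the occurrence of both digits. -/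
def IsDoubling (T : Finset (List Bool)) (c : Bool) (U : Finset (List Bool)) : Prop :=
  ∀ u ∈ U, ∀ v ∈ U, (!c) ∈ u → c ∈ v → Branches c u v →
    2 * (treeQuot T u).card ≤ (treeQuot T v).card

section Doubling

variable {T U V : Finset (List Bool)} {c : Bool} {u v p : List Bool}

theorem isDoubling_iff (hU : IsTree U) : IsDoubling T c U ↔
    ∀ u v, IsInterior U u → IsInterior U v → Branches c u v →
      2 * (treeQuot T u).card ≤ (treeQuot T v).card := by
  simp only [hU.isInterior_iff c]
  exact ⟨fun h u v hu hv huv => h u hu.1 v hv.1 hu.2.2 hv.2.1 huv,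
    fun h u hu v hv hnu hcv huv =>
      h u v ⟨hu, huv.mem_left, hnu⟩ ⟨hv, hcv, huv.mem_right⟩ huv⟩

theorem isDoubling_false_iff (hU : IsTree U) : IsDoubling T false U ↔
    ∀ u v, IsInterior U u → IsInterior U v → lexLt u v →
      2 * (treeQuot T u).card ≤ (treeQuot T v).card :=
  (isDoubling_iff hU).trans <| forall₄_congr fun _ _ hu hv => by
    rw [lexLt_iff_branches hU.isAntichain hu.1 hv.1]

theorem isDoubling_true_iff (hU : IsTree U) : IsDoubling T true U ↔
    ∀ u v, IsInterior U u → IsInterior U v → lexLt u v →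
      2 * (treeQuot T v).card ≤ (treeQuot T u).card := by
  rw [isDoubling_iff hU, forall_comm]
  refine forall₂_congr fun u v => forall_comm.trans <| forall₂_congr fun hu hv => ?_
  rw [lexLt_iff_branches hU.isAntichain hu.1 hv.1, ← branches_not_iff, Bool.not_true]

-- The surplus `|T/f|` makes the induction go through: `f` can be taken to be the first leaf
-- below `p`, and then `|T/p| ≤ |T/pc| + |T/p!c|` telescopes.
theorem IsDoubling.exists_card_add_card_le (hdbl : IsDoubling T c U) (hU : IsTree U)
    (hT : IsAntichain (· <+: ·) (T : Set (List Bool))) (hUT : ContainedIn U T)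
    (hu : u ∈ U) (hpu : p <+: u) (hcp : c ∈ p) (hnp : (!c) ∈ p) :
    ∃ f ∈ U, p <+: f ∧ ∀ z ∈ U, c ∈ z → Branches c p z →
      (treeQuot T p).card + (treeQuot T f).card ≤ (treeQuot T z).card := by
  revert hcp hnp
  refine hU.prefix_induction (P := fun p => c ∈ p → (!c) ∈ p → ∃ f ∈ U, p <+: f ∧
    ∀ z ∈ U, c ∈ z → Branches c p z →
      (treeQuot T p).card + (treeQuot T f).card ≤ (treeQuot T z).card) ?leaf ?node hu hpu
  case leaf =>
    intro p hp _ hnp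
    refine ⟨p, hp, List.prefix_rfl, fun z hz hcz hpz => ?_⟩
    have := hdbl p hp z hz hnp hcz hpz
    omega
  case node =>
    intro u hu p hpu hne ih hcp hnp
    obtain ⟨f, hf, hpf, hfirst⟩ := ih c (by simp) (by simp [hnp])
    obtain ⟨g, hg, hpg, hsecond⟩ := ih (!c) (by simp [hcp]) (by simp)
    refine ⟨f, hf, (List.prefix_append _ _).trans hpf, fun z hz hcz hpz => ?_⟩
    have hpT : p ∉ T := fun hpT => by
      obtain ⟨t, ht, hut⟩ := hUT u hu
      obtain rfl := hT.eq hpT ht (hpu.trans hut)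
      exact hne (antisymm hpu hut)
    have hsplit := card_treeQuot_le_add c hpT
    have hfg := hfirst g hg (hpg.subset (by simp [hcp]))
      ((branches_concat c p).mono List.prefix_rfl hpg)
    have hgz := hsecond z hz hcz (hpz.mono (List.prefix_append _ _) List.prefix_rfl)
    omega

theorem IsDoubling.card_lt_card (hdbl : IsDoubling T c U) (hU : IsTree U)
    (hT : IsAntichain (· <+: ·) (T : Set (List Bool))) (hUT : ContainedIn U T)
    (hleft : ∃ u ∈ U, [c, !c] <+: u) (hright : ∃ u ∈ U, [!c, c] <+: u) :
    (treeQuot T [c, !c]).card < (treeQuot T [!c, c]).card := by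
  obtain ⟨x, hx, hcx⟩ := hleft
  obtain ⟨z, hz, hcz⟩ := hright
  obtain ⟨f, hf, -, hle⟩ := hdbl.exists_card_add_card_le hU hT hUT hx hcx (by simp) (by simp)
  have hroot : Branches c [c, !c] [!c, c] := ⟨[], by simp⟩
  calc (treeQuot T [c, !c]).card
      < (treeQuot T [c, !c]).card + (treeQuot T f).card :=
        Nat.lt_add_of_pos_right (card_treeQuot_pos (hUT f hf))
    _ ≤ (treeQuot T z).card := hle z hz (hcz.subset (by simp)) (hroot.mono List.prefix_rfl hcz)
    _ ≤ (treeQuot T [!c, c]).card := card_treeQuot_le_of_prefix T hcz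

theorem IsDoubling.two_mul_card_le (hdblU : IsDoubling T c U) (hU : IsTree U)
    (hdblV : IsDoubling T c V) (hV : IsAntichain (· <+: ·) (V : Set (List Bool)))
    (hcaret : HasEndCaret c V) (hu : u ∈ U) (hnu : (!c) ∈ u) (hv : v ∈ V) (hcv : c ∈ v)
    (huv : Branches c u v) (hVu : ∃ v' ∈ V, v' <+: u) :
    2 * (treeQuot T u).card ≤ (treeQuot T v).card := by
  obtain ⟨v', hv', hv'u⟩ := hVu
  by_cases hnv' : (!c) ∈ v'
  · have hv'v : Branches c v' v := huv.of_prefix_left hv'u fun h => by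
      obtain rfl := hV.eq hv' hv h
      exact (branches_not_iff.2 huv).not_prefix hv'u
    calc 2 * (treeQuot T u).card
        ≤ 2 * (treeQuot T v').card := Nat.mul_le_mul_left 2 (card_treeQuot_le_of_prefix T hv'u)
      _ ≤ (treeQuot T v).card := hdblV v' hv' v hv hnv' hcv hv'v
  · obtain ⟨k, rfl, hsib⟩ := hcaret.exists_sibling_mem hV hv' hnv'
    have hsib_v := sibling_eq_or_branches hV hv' hsib hv huv.mem_right
    rw [List.replicate_succ'] at hv'u
    obtain ⟨w, hw, hsib_w⟩ := hU.exists_concat_prefix hu ((List.prefix_append _ _).trans hv'u)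
      (by rintro rfl; simp at hnu) (!c)
    have hc_sib : c ∈ List.replicate k c ++ [!c] :=
      hsib_v.elim (fun h => h ▸ hcv) Branches.mem_left
    have h_sib_le : (treeQuot T (List.replicate k c ++ [!c])).card ≤ (treeQuot T v).card := by
      rcases hsib_v with rfl | h
      · rfl
      · exact (Nat.le_mul_of_pos_left _ two_pos).trans (hdblV _ hsib v hv (by simp) hcv h)
    calc 2 * (treeQuot T u).card
        ≤ (treeQuot T w).card := hdblU u hu w hw hnu (hsib_w.subset hc_sib) ⟨_, hv'u, hsib_w⟩
      _ ≤ (treeQuot T (List.replicate k c ++ [!c])).card := card_treeQuot_le_of_prefix T hsib_w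
      _ ≤ (treeQuot T v).card := h_sib_le

end Doubling

/-- The elements of `S` without proper extensions in `S`. If `S` is a union of trees, these are the
leaves of the least tree containing all of them. -/
def tips (S : Finset (List Bool)) : Finset (List Bool) :=
  S.filter fun s => ∀ t ∈ S, s <+: t → s = t

/-- `S` is the union of the sets `U ⊆ S` with the property `P`. -/
def IsUnionOf (P : Finset (List Bool) → Prop) (S : Finset (List Bool)) : Prop :=
  ∀ s ∈ S, ∃ U ⊆ S, s ∈ U ∧ P U

section Tips

variable {P Q : Finset (List Bool) → Prop} {S T U : Finset (List Bool)} {c : Bool}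
  {s t : List Bool}

theorem IsUnionOf.mono (hS : IsUnionOf P S) (h : ∀ U, P U → Q U) : IsUnionOf Q S := fun s hs =>
  let ⟨U, hUS, hsU, hU⟩ := hS s hs
  ⟨U, hUS, hsU, h U hU⟩

theorem mem_tips : s ∈ tips S ↔ s ∈ S ∧ ∀ t ∈ S, s <+: t → s = t :=
  Finset.mem_filter

theorem exists_mem_tips_prefix (hs : s ∈ S) : ∃ t ∈ tips S, s <+: t := by
  obtain ⟨t, ht, hmax⟩ := Finset.exists_max_image (S.filter (s <+: ·)) List.length
    ⟨s, Finset.mem_filter.2 ⟨hs, List.prefix_rfl⟩⟩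
  obtain ⟨htS, hst⟩ := Finset.mem_filter.1 ht
  refine ⟨t, mem_tips.2 ⟨htS, fun r hr htr => ?_⟩, hst⟩
  exact htr.eq_of_length_le (hmax r (Finset.mem_filter.2 ⟨hr, hst.trans htr⟩))

theorem exists_prefix_of_mem_tips (ht : t ∈ tips S) (hUS : U ⊆ S) (hU : IsTree U) :
    ∃ u ∈ U, u <+: t := by
  obtain ⟨u, hu, h | h⟩ := hU.exists_comparable t
  · exact ⟨u, hu, h⟩
  · exact ⟨u, hu, ((mem_tips.1 ht).2 u (hUS hu) h) ▸ List.prefix_rfl⟩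

theorem isTree_tips (hS : IsUnionOf IsTree S) (hne : S.Nonempty) : IsTree (tips S) := by
  refine isTree_iff.2 ⟨fun s hs t ht hst h => hst ?_, fun x => ?_⟩
  · exact (mem_tips.1 hs).2 t (mem_tips.1 ht).1 h
  have hcover : ∀ s ∈ S, ∃ U ⊆ S, s ∈ U ∧ IsTree U ∧ ∃ u ∈ U, StreamPrefix u x := fun s hs =>
    let ⟨U, hUS, hsU, hU⟩ := hS s hs
    ⟨U, hUS, hsU, hU, (isTree_iff.1 hU).2 x⟩
  classical
  obtain ⟨s₀, hs₀⟩ := hne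
  obtain ⟨U₀, hU₀S, -, -, u₀, hu₀, hu₀x⟩ := hcover s₀ hs₀
  obtain ⟨w, hw, hmax⟩ := Finset.exists_max_image (S.filter (StreamPrefix · x)) List.length
    ⟨u₀, Finset.mem_filter.2 ⟨hU₀S hu₀, hu₀x⟩⟩
  obtain ⟨hwS, hwx⟩ := Finset.mem_filter.1 hw
  refine ⟨w, mem_tips.2 ⟨hwS, fun s hs hws => ?_⟩, hwx⟩
  obtain ⟨U, hUS, hsU, hU, u, hu, hux⟩ := hcover s hs
  have huw : u <+: w :=
    hux.prefix_of_length_le hwx (hmax u (Finset.mem_filter.2 ⟨hUS hu, hux⟩))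
  obtain rfl := hU.isAntichain.eq hu hsU (huw.trans hws)
  exact antisymm hws huw

theorem hasEndCaret_tips (hS : IsUnionOf (fun U => IsTree U ∧ HasEndCaret c U) S)
    (hne : S.Nonempty) : HasEndCaret c (tips S) := by
  obtain ⟨i, hi⟩ := (isTree_tips (hS.mono fun _ h => h.1) hne).exists_replicate_mem c
  obtain ⟨A, hAS, hiA, hA, hAcaret⟩ := hS _ (mem_tips.1 hi).1
  obtain ⟨k, hk, hsib⟩ := hAcaret.exists_sibling_mem hA.isAntichain hiA (by simp)
  rw [hk] at hi
  refine ⟨k, hi, mem_tips.2 ⟨hAS hsib, fun s hs hsib_s => ?_⟩⟩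
  obtain ⟨B, hBS, hsB, hB, hBcaret⟩ := hS s hs
  have hendB : List.replicate (k + 1) c ∈ B := by
    obtain ⟨e, he, hke⟩ := hB.exists_concat_prefix hsB ((List.prefix_append _ _).trans hsib_s)
      (by rintro rfl; simpa using hsib_s.length_le) c
    rw [← List.replicate_succ'] at hke
    rwa [(mem_tips.1 hi).2 e (hBS he) hke]
  obtain ⟨l, hl, hsibB⟩ := hBcaret.exists_sibling_mem hB.isAntichain hendB (by simp)
  obtain rfl : k = l := by simpa using congrArg List.length hl
  exact hB.isAntichain.eq hsibB hsB hsib_s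

theorem isDoubling_tips
    (hS : IsUnionOf (fun U => IsTree U ∧ HasEndCaret c U ∧ IsDoubling T c U) S) :
    IsDoubling T c (tips S) := by
  intro u hu v hv hnu hcv huv
  obtain ⟨U, -, huU, hU, -, hdblU⟩ := hS u (mem_tips.1 hu).1
  obtain ⟨V, hVS, hvV, hV, hcaret, hdblV⟩ := hS v (mem_tips.1 hv).1
  exact hdblU.two_mul_card_le hU hdblV hV.isAntichain hcaret huU hnu hvV hcv huv
    (exists_prefix_of_mem_tips hu hVS hV)

end Tips

/-- `U` satisfies the defining conditions for `∂T`, where the alternative of condition (2) is the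
one with side `c`. -/
structure IsBoundaryTree (T : Finset (List Bool)) (c : Bool) (U : Finset (List Bool)) : Prop where
  isTree : IsTree U
  containedIn : ContainedIn U T
  exists_prefix : ∀ d, ∃ u ∈ U, [d, !d] <+: u
  isDoubling : IsDoubling T c U
  hasEndCaret : ∀ d, HasEndCaret d U

section Boundary

variable {S T U V : Finset (List Bool)} {c d : Bool}

theorem defCondDT_iff : DefCondDT T U ↔ ∃ c, IsBoundaryTree T c U := by
  constructor
  · rintro ⟨hU, hUT, h01, h10, hdbl, hmin, hmax⟩
    have hcaret : ∀ d, HasEndCaret d U := Bool.forall_bool.2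
      ⟨(hasEndCaret_false_iff hU h01).2 hmin, (hasEndCaret_true_iff hU h10).2 hmax⟩
    have hext : ∀ d, ∃ u ∈ U, [d, !d] <+: u := Bool.forall_bool.2 ⟨h01, h10⟩
    rcases hdbl with hdbl | hdbl
    · exact ⟨false, hU, hUT, hext, (isDoubling_false_iff hU).2 hdbl, hcaret⟩
    · exact ⟨true, hU, hUT, hext, (isDoubling_true_iff hU).2 hdbl, hcaret⟩
  · rintro ⟨c, hU, hUT, hext, hdbl, hcaret⟩
    refine ⟨hU, hUT, hext false, hext true, ?_, (hasEndCaret_false_iff hU (hext false)).1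
      (hcaret false), (hasEndCaret_true_iff hU (hext true)).1 (hcaret true)⟩
    cases c
    · exact Or.inl ((isDoubling_false_iff hU).1 hdbl)
    · exact Or.inr ((isDoubling_true_iff hU).1 hdbl)

theorem IsBoundaryTree.card_lt_card (hT : IsAntichain (· <+: ·) (T : Set (List Bool)))
    (hU : IsBoundaryTree T c U) : (treeQuot T [c, !c]).card < (treeQuot T [!c, c]).card :=
  hU.isDoubling.card_lt_card hU.isTree hT hU.containedIn (hU.exists_prefix c)
    (by simpa using hU.exists_prefix (!c))

theorem IsBoundaryTree.side_unique (hT : IsAntichain (· <+: ·) (T : Set (List Bool)))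
    (hU : IsBoundaryTree T c U) (hV : IsBoundaryTree T d V) : c = d := by
  by_contra hcd
  obtain rfl := Bool.eq_not_of_ne hcd
  have hlt := hU.card_lt_card hT
  rw [Bool.not_not] at hlt
  exact lt_asymm hlt (hV.card_lt_card hT)

theorem isBoundaryTree_tips (hS : IsUnionOf (IsBoundaryTree T c) S) (hne : S.Nonempty) :
    IsBoundaryTree T c (tips S) where
  isTree := isTree_tips (hS.mono fun _ hU => hU.isTree) hne
  containedIn s hs := by
    obtain ⟨U, -, hsU, hU⟩ := hS s (mem_tips.1 hs).1
    exact hU.containedIn s hsU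
  exists_prefix d := by
    obtain ⟨s, hs⟩ := hne
    obtain ⟨U, hUS, -, hU⟩ := hS s hs
    obtain ⟨u, hu, hdu⟩ := hU.exists_prefix d
    obtain ⟨t, ht, hut⟩ := exists_mem_tips_prefix (hUS hu)
    exact ⟨t, ht, hdu.trans hut⟩
  isDoubling := isDoubling_tips (hS.mono fun _ hU => ⟨hU.isTree, hU.hasEndCaret c, hU.isDoubling⟩)
  hasEndCaret d := hasEndCaret_tips (hS.mono fun _ hU => ⟨hU.isTree, hU.hasEndCaret d⟩) hne

theorem finite_setOf_mem_containedIn (T : Finset (List Bool)) :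
    {s | ∃ U, ContainedIn U T ∧ s ∈ U}.Finite :=
  (T.biUnion fun t => t.inits.toFinset).finite_toSet.subset fun s ⟨_, hUT, hs⟩ => by
    simpa using hUT s hs

theorem exists_forall_mem_iff_isBoundaryTree (T : Finset (List Bool)) (c : Bool) :
    ∃ S : Finset (List Bool), ∀ s, s ∈ S ↔ ∃ U, IsBoundaryTree T c U ∧ s ∈ U := by
  have hfin : {s | ∃ U, IsBoundaryTree T c U ∧ s ∈ U}.Finite :=
    (finite_setOf_mem_containedIn T).subset fun s ⟨U, hU, hs⟩ => ⟨U, hU.containedIn, hs⟩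
  exact ⟨hfin.toFinset, fun s => hfin.mem_toFinset⟩

end Boundary

theorem exists_max_defCond_general (T : Finset (List Bool))
    (hT : IsAntichain (· <+: ·) (T : Set (List Bool))) (h : ∃ U, DefCondDT T U) :
    ∃ Umax, DefCondDT T Umax ∧ ∀ U, DefCondDT T U → ContainedIn U Umax := by
  obtain ⟨U₀, h₀⟩ := h
  obtain ⟨c, hU₀⟩ := defCondDT_iff.1 h₀
  obtain ⟨S, hS⟩ := exists_forall_mem_iff_isBoundaryTree T c
  have hsubset : ∀ U, IsBoundaryTree T c U → U ⊆ S := fun U hU u hu => (hS u).2 ⟨U, hU, hu⟩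
  have hunion : IsUnionOf (IsBoundaryTree T c) S := fun s hs =>
    let ⟨U, hU, hsU⟩ := (hS s).1 hs
    ⟨U, hsubset U hU, hsU, hU⟩
  obtain ⟨u₀, hu₀, -⟩ := hU₀.exists_prefix c
  refine ⟨tips S, defCondDT_iff.2 ⟨c, isBoundaryTree_tips hunion ⟨u₀, hsubset U₀ hU₀ hu₀⟩⟩, ?_⟩
  intro U h u hu
  obtain ⟨d, hU⟩ := defCondDT_iff.1 h
  obtain rfl := hU₀.side_unique hT hU
  exact exists_mem_tips_prefix (hsubset U hU hu)

/-- If some `U ∈ 𝒯` satisfies the defining conditions for `∂T`, then there is a maximum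
such `U`: one which contains every other tree satisfying the defining conditions. -/
theorem exists_max_defCond (T : Finset (List Bool)) (hT : IsTree T)
    (h : ∃ U, DefCondDT T U) :
    ∃ Umax, DefCondDT T Umax ∧ ∀ U, DefCondDT T U → ContainedIn U Umax :=
  exists_max_defCond_general T hT.isAntichain h
end
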